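/- The central binomial series identity ∑_{n=0}^∞ 2^{2n−1} / ( C(2n, n) · (n+1)² · (2n+1) ) = (π² ln 2)/4 − (7/8) ζ(3) holds, where C(2n, n) is the central binomial coefficient and ζ(3) = ∑_{n=1}^∞ 1/n³. -/

import Mathlib

open Real

noncomputable def bq : ℕ → ℝ
  | 0 => 1
  | (n+1) => bq n * (2 * ((n:ℝ)+1)^2 / (((n:ℝ)+2)*(2*n+3)))

lemma bq_pos (n : ℕ) : 0 < bq n := by
  induction n with
  | zero => simp [bq]
  | succ n ih => rw [bq]; positivity

lemma term_eq (n : ℕ) : (2 : ℝ) ^ (2 * (n : ℤ) - 1)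
        / (Nat.choose (2 * n) n * ((n : ℝ) + 1) ^ 2 * (2 * (n : ℝ) + 1)) = bq n / (2 * ((n:ℝ)+1)) := by
  induction n with
  | zero => norm_num [bq]
  | succ n ih =>
    have hc : ((n:ℝ)+1) * (Nat.choose (2*(n+1)) (n+1) : ℝ) = 2 * (2*n+1) * (Nat.choose (2*n) n : ℝ) := by
      have := Nat.succ_mul_centralBinom_succ n
      simp only [Nat.centralBinom] at this
      exact_mod_cast this
    have hp : (0:ℝ) < (Nat.choose (2*n) n : ℝ) := by
      exact_mod_cast Nat.choose_pos (by omega)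
    have hc2 : (Nat.choose (2*(n+1)) (n+1) : ℝ) = 2 * (2*n+1) * (Nat.choose (2*n) n : ℝ) / ((n:ℝ)+1) := by
      field_simp; linarith
    have hz : (2:ℝ)^(2 * ((n+1 : ℕ):ℤ) - 1) = 4 * (2:ℝ)^(2 * (n:ℤ) - 1) := by
      have : 2 * ((n+1 : ℕ):ℤ) - 1 = (2 * (n:ℤ) - 1) + 2 := by push_cast; ring
      rw [this, zpow_add₀ (by norm_num)]; norm_num; ring
    rw [hz, hc2, bq]
    have hb : bq n = 2 * ((n:ℝ)+1) * ((2 : ℝ) ^ (2 * (n : ℤ) - 1)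
        / (Nat.choose (2 * n) n * ((n : ℝ) + 1) ^ 2 * (2 * (n : ℝ) + 1))) := by
      rw [ih]; field_simp
    rw [hb]
    push_cast
    generalize (2 : ℝ) ^ (2 * (n : ℤ) - 1) = z
    field_simp
    ring

lemma dq_bound (n : ℕ) : ((2*(n:ℝ)+2) * bq n)^2 * ((n:ℝ)+1) ≤ 4 := by
  induction n with
  | zero => norm_num [bq]
  | succ n ih =>
    refine le_trans ?_ ih
    have hb := bq_pos n
    rw [bq]; push_cast
    have : ((2*((n:ℝ)+1)+2) * (bq n * (2 * ((n:ℝ)+1)^2 / (((n:ℝ)+2)*(2*n+3)))))^2 * ((n:ℝ)+1+1)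
       = ((2*(n:ℝ)+2) * bq n)^2 * ((n:ℝ)+1) * (4 * (n+1)*(n+2) / (2*n+3)^2) := by
      field_simp; ring
    rw [this]
    apply mul_le_of_le_one_right (by positivity)
    rw [div_le_one (by positivity)]
    nlinarith

lemma dq_tendsto : Filter.Tendsto (fun n : ℕ => (2*(n:ℝ)+2) * bq n) Filter.atTop (nhds 0) := by
  have h : Filter.Tendsto (fun n : ℕ => √(4 * (1 / ((n:ℝ)+1)))) Filter.atTop (nhds 0) := by
    have := (tendsto_one_div_add_atTop_nhds_zero_nat (𝕜 := ℝ)).const_mul 4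
    simpa using this.sqrt
  refine squeeze_zero (fun n => by have := bq_pos n; positivity) (fun n => ?_) h
  apply Real.le_sqrt_of_sq_le
  rw [mul_one_div, le_div_iff₀ (by positivity)]
  exact dq_bound n

noncomputable def Rq (N : ℕ) (t : ℝ) : ℝ := t^2 - ∑ n ∈ Finset.range N, bq n * sin t ^ (2*n+2)
noncomputable def Rq1 (N : ℕ) (t : ℝ) : ℝ :=
  2*t - ∑ n ∈ Finset.range N, bq n * ((2*n+2) * sin t ^ (2*n+1) * cos t)

lemma Rq_deriv (N : ℕ) (t : ℝ) : HasDerivAt (Rq N) (Rq1 N t) t := by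
  unfold Rq Rq1
  apply HasDerivAt.sub
  · simpa using hasDerivAt_pow 2 t
  · apply HasDerivAt.fun_sum
    intro n _
    apply HasDerivAt.const_mul
    have := (hasDerivAt_sin t).pow (2*n+2)
    refine HasDerivAt.congr_deriv this ?_
    push_cast; simp

lemma Rq1_deriv (N : ℕ) (t : ℝ) :
    HasDerivAt (Rq1 N) ((2*N+2)*(2*N+1)*bq N * sin t ^ (2*N)) t := by
  induction N with
  | zero =>
    have : Rq1 0 = fun t => 2 * t := by ext; simp [Rq1]
    rw [this]
    simpa [bq] using (hasDerivAt_id t).const_mul 2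
  | succ N ih =>
    have : Rq1 (N+1) = fun t => Rq1 N t - bq N * ((2*N+2) * sin t ^ (2*N+1) * cos t) := by
      ext; simp [Rq1, Finset.sum_range_succ]; ring
    rw [this]
    have h2 := (((((hasDerivAt_sin t).pow (2*N+1)).const_mul (2*(N:ℝ)+2)).mul
      (hasDerivAt_cos t))).const_mul (bq N)
    have h3 := ih.sub h2
    refine HasDerivAt.congr_deriv h3 ?_
    simp only [Pi.pow_apply]
    have hs : cos t * cos t = 1 - sin t ^2 := by rw [← Real.cos_sq']; ring
    have e : (2*N+1-1) = 2*N := by omega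
    rw [e]
    have : (2 * ↑N + 2) * (((2 * N + 1 : ℕ):ℝ) * sin t ^ (2 * N) * cos t) * cos t
      = (2 * ↑N + 2) * (((2 * N + 1 : ℕ):ℝ) * sin t ^ (2 * N) * (1 - sin t^2)) := by
      rw [← hs]; ring
    rw [this, bq]; push_cast; field_simp; ring

lemma Rq_zero (N : ℕ) : Rq N 0 = 0 := by simp [Rq]
lemma Rq1_zero (N : ℕ) : Rq1 N 0 = 0 := by simp [Rq1]

lemma mono_aux {f f' : ℝ → ℝ} (hf : ∀ t, HasDerivAt f (f' t) t) (h0 : f 0 = 0)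
    (hn : ∀ t, 0 ≤ t → t ≤ π/2 → 0 ≤ f' t) {t : ℝ} (ht : 0 ≤ t) (ht2 : t ≤ π/2) : 0 ≤ f t := by
  have hm : MonotoneOn f (Set.Icc 0 (π/2)) := by
    apply monotoneOn_of_deriv_nonneg (convex_Icc _ _)
    · exact fun x _ => (hf x).continuousAt.continuousWithinAt
    · exact fun x _ => (hf x).differentiableAt.differentiableWithinAt
    · intro x hx
      rw [interior_Icc] at hx
      rw [(hf x).deriv]
      exact hn x hx.1.le hx.2.le
  rw [← h0]
  exact hm ⟨le_rfl, by positivity⟩ ⟨ht, ht2⟩ ht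

lemma sin_nn {t : ℝ} (ht : 0 ≤ t) (ht2 : t ≤ π/2) : 0 ≤ sin t :=
  sin_nonneg_of_nonneg_of_le_pi ht (by linarith [pi_pos])

lemma Rq2_nonneg (N : ℕ) {t : ℝ} (ht : 0 ≤ t) (ht2 : t ≤ π/2) :
    0 ≤ (2*N+2)*(2*N+1)*bq N * sin t ^ (2*N) := by
  have := sin_nn ht ht2
  have := bq_pos N
  positivity

lemma Rq1_nonneg (N : ℕ) {t : ℝ} (ht : 0 ≤ t) (ht2 : t ≤ π/2) : 0 ≤ Rq1 N t :=
  mono_aux (Rq1_deriv N) (Rq1_zero N) (fun _ h1 h2 => Rq2_nonneg N h1 h2) ht ht2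

lemma Rq_nonneg (N : ℕ) {t : ℝ} (ht : 0 ≤ t) (ht2 : t ≤ π/2) : 0 ≤ Rq N t :=
  mono_aux (Rq_deriv N) (Rq_zero N) (fun _ h1 h2 => Rq1_nonneg N h1 h2) ht ht2

lemma Rq_le (N : ℕ) {t : ℝ} (ht : 0 ≤ t) (ht2 : t ≤ π/2) : Rq N t ≤ t * Rq1 N t := by
  have := mono_aux (f := fun t => t * Rq1 N t - Rq N t)
    (f' := fun t => t * ((2*N+2)*(2*N+1)*bq N * sin t ^ (2*N)))
    (fun t => by
      have := ((hasDerivAt_id t).mul (Rq1_deriv N t)).sub (Rq_deriv N t)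
      refine HasDerivAt.congr_deriv this ?_
      simp) (by simp [Rq_zero]) (fun t h1 h2 => mul_nonneg h1 (Rq2_nonneg N h1 h2)) ht ht2
  simpa using this

lemma Rq1_cos_le (N : ℕ) {t : ℝ} (ht : 0 ≤ t) (ht2 : t ≤ π/2) :
    Rq1 N t * cos t ≤ (2*(N:ℝ)+2) * bq N * sin t ^ (2*N+1) := by
  have := mono_aux (f := fun t => (2*(N:ℝ)+2) * bq N * sin t ^ (2*N+1) - Rq1 N t * cos t)
    (f' := fun t => Rq1 N t * sin t)
    (fun t => by
      have := (((hasDerivAt_sin t).pow (2*N+1)).const_mul ((2*(N:ℝ)+2) * bq N)).sub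
        ((Rq1_deriv N t).mul (hasDerivAt_cos t))
      refine HasDerivAt.congr_deriv this ?_
      push_cast; simp; ring) (by simp [Rq1_zero])
      (fun t h1 h2 => mul_nonneg (Rq1_nonneg N h1 h2) (sin_nn h1 h2)) ht ht2
  simpa using this

lemma Rq_cot_nonneg (N : ℕ) {t : ℝ} (ht : 0 ≤ t) (ht2 : t ≤ π/2) : 0 ≤ Rq N t * cos t / sin t :=
  div_nonneg (mul_nonneg (Rq_nonneg N ht ht2) (cos_nonneg_of_neg_pi_div_two_le_of_le (by linarith) ht2))
    (sin_nn ht ht2)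

lemma Rq_cot_le (N : ℕ) {t : ℝ} (ht : 0 < t) (ht2 : t ≤ π/2) :
    Rq N t * cos t / sin t ≤ π/2 * ((2*(N:ℝ)+2) * bq N) := by
  have hs : 0 < sin t := sin_pos_of_pos_of_lt_pi ht (by linarith [pi_pos])
  have hc : 0 ≤ cos t := cos_nonneg_of_neg_pi_div_two_le_of_le (by linarith) ht2
  have hb := bq_pos N
  rw [div_le_iff₀ hs]
  calc Rq N t * cos t ≤ t * Rq1 N t * cos t := by gcongr; exact Rq_le N ht.le ht2
    _ = t * (Rq1 N t * cos t) := by ring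
    _ ≤ π/2 * ((2*(N:ℝ)+2) * bq N * sin t ^ (2*N+1)) := by
        exact mul_le_mul ht2 (Rq1_cos_le N ht.le ht2)
          (mul_nonneg (Rq1_nonneg N ht.le ht2) hc) (by positivity)
    _ ≤ π/2 * ((2*(N:ℝ)+2) * bq N * sin t) := by
        gcongr
        exact pow_le_of_le_one hs.le (sin_le_one t) (by omega)
    _ = _ := by ring

lemma h_cont : ContinuousOn (fun t : ℝ => t^2 / sin t) (Set.Icc 0 (π/2)) := by
  have : ContinuousOn (fun t : ℝ => t / sinc t) (Set.Icc 0 (π/2)) := by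
    apply continuousOn_id.div continuous_sinc.continuousOn
    intro t ht
    by_cases h : t = 0
    · simp [h]
    · rw [sinc_of_ne_zero h]
      have := sin_pos_of_pos_of_lt_pi (lt_of_le_of_ne ht.1 (Ne.symm h)) (by linarith [pi_pos, ht.2])
      positivity
  refine this.congr fun t ht => ?_
  by_cases h : t = 0
  · simp [h]
  · simp only [sinc_of_ne_zero h]; rw [div_div_eq_mul_div]; ring

lemma g_cont : ContinuousOn (fun t : ℝ => t^2 * cos t / sin t) (Set.Icc 0 (π/2)) := by
  refine (h_cont.mul continuous_cos.continuousOn).congr fun t ht => ?_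
  simp only [Pi.mul_apply]; ring

lemma uIcc_pi : Set.uIcc 0 (π/2) = Set.Icc 0 (π/2) := Set.uIcc_of_le (by positivity)

lemma part_int (N : ℕ) : ∫ t in (0:ℝ)..(π/2), ∑ n ∈ Finset.range N, bq n * (sin t ^ (2*n+1) * cos t)
    = ∑ n ∈ Finset.range N, bq n / (2 * ((n:ℝ)+1)) := by
  rw [intervalIntegral.integral_finsetSum]
  · apply Finset.sum_congr rfl
    intro n _
    have : ∀ t ∈ Set.uIcc 0 (π/2), HasDerivAt (fun t => bq n / (2 * ((n:ℝ)+1)) * sin t ^ (2*n+2))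
      (bq n * (sin t ^ (2*n+1) * cos t)) t := by
      intro t _
      have := ((hasDerivAt_sin t).pow (2*n+2)).const_mul (bq n / (2 * ((n:ℝ)+1)))
      refine HasDerivAt.congr_deriv this ?_
      push_cast
      field_simp
    rw [intervalIntegral.integral_eq_sub_of_hasDerivAt this]
    · simp
    · apply Continuous.intervalIntegrable; fun_prop
  · intro n _
    apply Continuous.intervalIntegrable; fun_prop

lemma sum_tendsto : Filter.Tendsto (fun N => ∑ n ∈ Finset.range N, bq n / (2 * ((n:ℝ)+1))) Filter.atTop
    (nhds (∫ t in (0:ℝ)..(π/2), t^2 * cos t / sin t)) := by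
  have hg : IntervalIntegrable (fun t : ℝ => t^2 * cos t / sin t) MeasureTheory.volume 0 (π/2) := by
    apply ContinuousOn.intervalIntegrable; rw [uIcc_pi]; exact g_cont
  rw [tendsto_iff_norm_sub_tendsto_zero]
  have hlim := (dq_tendsto.const_mul (π/2)).mul_const |π/2 - 0|
  rw [mul_zero, zero_mul] at hlim
  refine squeeze_zero (fun _ => norm_nonneg _) (fun N => ?_) hlim
  rw [← part_int, norm_sub_rev, ← intervalIntegral.integral_sub hg]
  · apply intervalIntegral.norm_integral_le_of_norm_le_const
    intro t ht
    rw [Set.uIoc_of_le (by positivity)] at ht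
    have hs : 0 < sin t := sin_pos_of_pos_of_lt_pi ht.1 (by linarith [pi_pos, ht.2])
    have : t^2 * cos t / sin t - ∑ n ∈ Finset.range N, bq n * (sin t ^ (2*n+1) * cos t)
      = Rq N t * cos t / sin t := by
      rw [Rq, sub_mul, sub_div, Finset.sum_mul, Finset.sum_div]
      congr 1
      apply Finset.sum_congr rfl
      intro n _
      field_simp
      ring
    rw [this, Real.norm_of_nonneg (Rq_cot_nonneg N ht.1.le ht.2)]
    exact Rq_cot_le N ht.1 ht.2
  · apply Continuous.intervalIntegrable; fun_prop

lemma cot_sum (n : ℕ) (t : ℝ) :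
    2 * sin t * ∑ k ∈ Finset.range n, sin (2*((k:ℝ)+1)*t) = cos t - cos ((2*(n:ℝ)+1)*t) := by
  induction n with
  | zero => simp
  | succ n ih =>
    rw [Finset.sum_range_succ, mul_add, ih]
    push_cast
    have e1 : (2*(n:ℝ)+1)*t = 2*((n:ℝ)+1)*t - t := by ring
    have e2 : (2*((n:ℝ)+1)+1)*t = 2*((n:ℝ)+1)*t + t := by ring
    rw [e1, e2, cos_sub, cos_add]; ring

lemma sin_int (k : ℕ) : ∫ t in (0:ℝ)..(π/2), t^2 * sin (2*((k:ℝ)+1)*t)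
    = π^2/8 * ((-1)^k/((k:ℝ)+1)) - ((-1)^k + 1)/(4*((k:ℝ)+1)^3) := by
  set a : ℝ := 2*((k:ℝ)+1) with ha
  have ha0 : a ≠ 0 := by positivity
  have hd : ∀ t ∈ Set.uIcc 0 (π/2), HasDerivAt
      (fun t => -(t^2 * cos (a*t))/a + 2*t*sin (a*t)/a^2 + 2*cos (a*t)/a^3) (t^2 * sin (a*t)) t := by
    intro t _
    have hl : HasDerivAt (fun t => a*t) a t := by simpa using (hasDerivAt_id t).const_mul a
    have h1 := (((hasDerivAt_pow 2 t).mul hl.cos).neg).div_const a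
    have h2 := ((((hasDerivAt_id t).const_mul 2).mul hl.sin)).div_const (a^2)
    have h3 := ((hl.cos).const_mul 2).div_const (a^3)
    refine HasDerivAt.congr_deriv ((h1.add h2).add h3) ?_
    simp only [id]
    field_simp
    push_cast
    ring
  rw [intervalIntegral.integral_eq_sub_of_hasDerivAt hd]
  · have e : a * (π/2) = ((k+1:ℕ):ℝ) * π := by rw [ha]; push_cast; ring
    rw [e, cos_nat_mul_pi, sin_nat_mul_pi, ha]
    simp only [mul_zero, cos_zero, sin_zero]
    rw [pow_succ (-1:ℝ) k]
    field_simp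
    ring
  · apply Continuous.intervalIntegrable; fun_prop

lemma rl : Filter.Tendsto (fun n : ℕ => ∫ t in (0:ℝ)..(π/2), t^2 / sin t * cos ((2*(n:ℝ)+1)*t))
    Filter.atTop (nhds 0) := by
  have hw : Filter.Tendsto (fun n : ℕ => (2*(n:ℝ)+1)/(2*π)) Filter.atTop (Filter.cocompact ℝ) := by
    refine Filter.Tendsto.mono_right ?_ atTop_le_cocompact
    apply Filter.Tendsto.atTop_div_const (by positivity)
    apply Filter.tendsto_atTop_add_const_right
    exact tendsto_natCast_atTop_atTop.const_mul_atTop (by norm_num)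
  have h := (Real.tendsto_integral_exp_smul_cocompact
    ((Set.Ioc 0 (π/2)).indicator fun t : ℝ => ((t^2 / sin t : ℝ) : ℂ))).comp hw
  have h2 := (Complex.continuous_re.tendsto _).comp h
  simp only [Complex.zero_re] at h2
  refine h2.congr fun n => ?_
  simp only [Function.comp_apply]
  have e : ∀ v : ℝ, fourierChar (-(v * ((2*(n:ℝ)+1)/(2*π)))) • (Set.Ioc 0 (π/2)).indicator (fun t : ℝ => ((t^2 / sin t : ℝ) : ℂ)) v
     = (Set.Ioc 0 (π/2)).indicator (fun t : ℝ => Complex.exp (((-((2*(n:ℝ)+1)*t) : ℝ):ℂ) * Complex.I) * ((t^2 / sin t : ℝ) : ℂ)) v := by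
    intro v
    by_cases hv : v ∈ Set.Ioc 0 (π/2)
    · rw [Set.indicator_of_mem hv, Set.indicator_of_mem hv, Circle.smul_def, Real.fourierChar_apply, smul_eq_mul]
      congr 4
      field_simp
    · rw [Set.indicator_of_notMem hv, Set.indicator_of_notMem hv, smul_zero]
  simp_rw [e]
  rw [MeasureTheory.integral_indicator measurableSet_Ioc, ← intervalIntegral.integral_of_le (by positivity)]
  have hi : IntervalIntegrable (fun t : ℝ => Complex.exp (((-((2*(n:ℝ)+1)*t) : ℝ):ℂ) * Complex.I) * ((t^2 / sin t : ℝ) : ℂ)) MeasureTheory.volume 0 (π/2) := by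
    apply ContinuousOn.intervalIntegrable
    rw [uIcc_pi]
    apply ContinuousOn.mul
    · apply Continuous.continuousOn; fun_prop
    · exact Complex.continuous_ofReal.comp_continuousOn h_cont
  have := Complex.reCLM.intervalIntegral_comp_comm hi
  simp only [Complex.reCLM_apply] at this
  rw [← this]
  apply intervalIntegral.integral_congr
  intro t _
  simp only [Complex.mul_re, Complex.exp_ofReal_mul_I_re, Complex.ofReal_re, Complex.ofReal_im, mul_zero, sub_zero, cos_neg]
  ring

lemma alt_log : Filter.Tendsto (fun n : ℕ => ∑ k ∈ Finset.range (2*n), (-1:ℝ)^k/((k:ℝ)+1))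
    Filter.atTop (nhds (log 2)) := by
  have h1 := Real.tendsto_harmonic_sub_log
  have h2 : Filter.Tendsto (fun n : ℕ => 2*n) Filter.atTop Filter.atTop :=
    Filter.tendsto_id.const_mul_atTop' (by norm_num)
  have h3 := ((h1.comp h2).sub h1).add_const (log 2)
  rw [sub_self, zero_add] at h3
  refine h3.congr' ?_
  filter_upwards [Filter.eventually_gt_atTop 0] with n hn
  have hs : ∀ n : ℕ, ∑ k ∈ Finset.range (2*n), (-1:ℝ)^k/((k:ℝ)+1) = (harmonic (2*n) : ℝ) - harmonic n := by
    intro n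
    induction n with
    | zero => simp
    | succ n ih =>
      rw [show 2*(n+1) = 2*n+1+1 by ring, Finset.sum_range_succ, Finset.sum_range_succ, ih,
        harmonic_succ, harmonic_succ, harmonic_succ, pow_succ, pow_mul]
      push_cast
      norm_num
      field_simp
      ring
  rw [hs]
  simp only [Function.comp_apply]
  push_cast
  rw [log_mul (by norm_num) (by positivity)]
  ring

lemma zeta_sum : HasSum (fun k : ℕ => ((-1:ℝ)^k + 1)/(4*((k:ℝ)+1)^3))
    (7/16 * ∑' n : ℕ, 1 / ((n : ℝ) + 1) ^ 3) := by
  have hs : Summable (fun n : ℕ => 1 / ((n : ℝ) + 1) ^ 3) := by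
    have := (summable_nat_add_iff (f := fun n : ℕ => 1 / (n:ℝ)^3) 1).mpr
      (Real.summable_one_div_nat_pow.mpr (by norm_num))
    simpa using this
  have hE : Summable (fun n : ℕ => 1 / (((2*n : ℕ) : ℝ) + 1) ^ 3) :=
    hs.comp_injective (i := fun n : ℕ => 2*n) (fun a b h => by simpa using h)
  have hO : HasSum (fun n : ℕ => 1 / (((2*n+1 : ℕ) : ℝ) + 1) ^ 3) (1/8 * ∑' n : ℕ, 1 / ((n : ℝ) + 1) ^ 3) := by
    have e : (fun n : ℕ => 1 / (((2*n+1 : ℕ) : ℝ) + 1) ^ 3)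
        = fun n : ℕ => 1/8 * (1 / ((n : ℝ) + 1) ^ 3) := by
      ext n; push_cast; field_simp; ring
    rw [e]
    exact hs.hasSum.mul_left (1/8)
  have hEO := HasSum.even_add_odd (f := fun n : ℕ => 1 / ((n : ℝ) + 1) ^ 3) hE.hasSum hO
  have hu := hEO.unique hs.hasSum
  have h := hE.hasSum.mul_left (1/2)
  have h0 : HasSum (fun n : ℕ => (0:ℝ)) 0 := hasSum_zero
  have e1 : (fun n : ℕ => ((-1:ℝ)^(2*n) + 1)/(4*(((2*n:ℕ):ℝ)+1)^3))
      = fun n : ℕ => 1/2 * (1 / (((2*n : ℕ) : ℝ) + 1) ^ 3) := by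
    ext n; rw [pow_mul]; norm_num; field_simp; norm_num
  have e2 : (fun n : ℕ => ((-1:ℝ)^(2*n+1) + 1)/(4*(((2*n+1:ℕ):ℝ)+1)^3)) = fun n : ℕ => 0 := by
    ext n; rw [pow_succ, pow_mul]; norm_num
  rw [← e1] at h
  rw [← e2] at h0
  have hf := HasSum.even_add_odd (f := fun k : ℕ => ((-1:ℝ)^k + 1)/(4*((k:ℝ)+1)^3)) h h0
  have e3 : 7/16 * ∑' n : ℕ, 1 / ((n : ℝ) + 1) ^ 3
      = 1/2 * ∑' n : ℕ, 1 / (((2*n : ℕ) : ℝ) + 1) ^ 3 + 0 := by linarith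
  rw [e3]
  exact hf

lemma int_eq : ∫ t in (0:ℝ)..(π/2), t^2 * cos t / sin t
    = π ^ 2 * log 2 / 4 - 7 / 8 * ∑' n : ℕ, 1 / ((n : ℝ) + 1) ^ 3 := by
  have key : ∀ n : ℕ, ∫ t in (0:ℝ)..(π/2), t^2 * cos t / sin t =
      2 * (π^2/8 * ∑ k ∈ Finset.range n, (-1:ℝ)^k/((k:ℝ)+1)
        - ∑ k ∈ Finset.range n, ((-1:ℝ)^k + 1)/(4*((k:ℝ)+1)^3))
      + ∫ t in (0:ℝ)..(π/2), t^2 / sin t * cos ((2*(n:ℝ)+1)*t) := by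
    intro n
    rw [Finset.mul_sum, ← Finset.sum_sub_distrib]
    simp_rw [← sin_int]
    rw [← intervalIntegral.integral_finsetSum, ← intervalIntegral.integral_const_mul,
      ← intervalIntegral.integral_add]
    · apply intervalIntegral.integral_congr
      intro t ht
      rw [uIcc_pi] at ht
      by_cases h : t = 0
      · simp [h]
      have hs : 0 < sin t :=
        sin_pos_of_pos_of_lt_pi (lt_of_le_of_ne ht.1 (Ne.symm h)) (by linarith [pi_pos, ht.2])
      have hc := cot_sum n t
      simp only
      rw [← Finset.mul_sum]
      have : cos t = 2 * sin t * ∑ k ∈ Finset.range n, sin (2*((k:ℝ)+1)*t) + cos ((2*(n:ℝ)+1)*t) := by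
        linarith
      rw [this]
      field_simp
    · apply Continuous.intervalIntegrable; fun_prop
    · apply ContinuousOn.intervalIntegrable
      rw [uIcc_pi]
      apply h_cont.mul
      apply Continuous.continuousOn; fun_prop
    · intro k _
      apply Continuous.intervalIntegrable; fun_prop
  have h2 : Filter.Tendsto (fun n : ℕ => 2*n) Filter.atTop Filter.atTop :=
    Filter.tendsto_id.const_mul_atTop' (by norm_num)
  have hl := ((((alt_log.const_mul (π^2/8)).sub (zeta_sum.tendsto_sum_nat.comp h2)).const_mul 2).add
    (rl.comp h2))
  have hl' := hl.congr (fun n => (key (2*n)).symm)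
  rw [tendsto_nhds_unique tendsto_const_nhds hl']
  ring
/-- `∑_{n≥0} 2^(2n-1) / (C(2n,n) (n+1)² (2n+1)) = π² ln 2 / 4 - (7/8) ζ(3)`,
where `ζ(3) = ∑_{n≥1} 1/n³`. -/
theorem centralBinomial_sum :
    ∑' n : ℕ, (2 : ℝ) ^ (2 * (n : ℤ) - 1)
        / (Nat.choose (2 * n) n * ((n : ℝ) + 1) ^ 2 * (2 * (n : ℝ) + 1))
      = Real.pi ^ 2 * Real.log 2 / 4 - 7 / 8 * ∑' n : ℕ, 1 / ((n : ℝ) + 1) ^ 3 := by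
  simp_rw [term_eq]
  rw [← int_eq]
  refine HasSum.tsum_eq ?_
  rw [hasSum_iff_tendsto_nat_of_nonneg (fun n => by have := bq_pos n; positivity)]
  exact sum_tendsto
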